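/- For every nonnegative integer n and all p, q, the n-fold tensor power of Cl(2,0;ℝ) tensored with Cl(p,q;ℝ) is isomorphic as a real algebra to Cl(p+n, q+n;ℝ). -/

import Mathlib

/-- The real quadratic form of signature `(p, q)` on `Fin (p + q) → ℝ`. -/
noncomputable def signatureForm (p q : ℕ) : QuadraticForm ℝ (Fin (p + q) → ℝ) :=
  QuadraticMap.weightedSumSquares ℝ (fun i : Fin (p + q) => if (i : ℕ) < p then (1 : ℝ) else -1)

/-- `Cl p q` is the real Clifford algebra `Cl(p,q;ℝ)`. -/
noncomputable abbrev Cl (p q : ℕ) : Type :=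
  CliffordAlgebra (signatureForm p q)

open scoped TensorProduct

/-!
The product `ω` of the two generators of the hyperbolic plane `⟨1, -1⟩` is even, anticommutes with
vectors and has square `1`. Hence in `Cl(⟨1, -1⟩ ⊥ Q)` the elements `ω m`, for `m` a vector of `Q`,
commute with `Cl(⟨1, -1⟩)` and generate a copy of `Cl(Q)`, so that
`Cl(⟨1, -1⟩) ⊗ Cl(Q) ≅ Cl(⟨1, -1⟩ ⊥ Q)`. Replacing the second generator `f` of `Cl(⟨1, 1⟩)` by
`e f`, where `e` is the first one, identifies `Cl(2,0)` with `Cl(⟨1, -1⟩)`, because `(e f)² = -1`.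
So every factor `Cl(2,0)` adds one hyperbolic plane.
-/

section TensorPower

open PiTensorProduct

variable {R : Type*} [CommSemiring R]

/-- A linear equivalence out of a tensor product of algebras that is multiplicative on pure tensors,
as an algebra equivalence. -/
noncomputable def piTensorAlgEquivOfLinearEquiv {ι B : Type*} {A : ι → Type*}
    [∀ i, Semiring (A i)] [∀ i, Algebra R (A i)] [Semiring B] [Algebra R B]
    (e : (⨂[R] i, A i) ≃ₗ[R] B) (map_one : e (tprod R 1) = 1)
    (map_mul : ∀ f g, e (tprod R (f * g)) = e (tprod R f) * e (tprod R g)) :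
    (⨂[R] i, A i) ≃ₐ[R] B :=
  .ofLinearEquiv e map_one <| (LinearMap.map_mul_iff e.toLinearMap).mpr <| by
    ext f g
    simpa using map_mul f g

variable (R) (A : Type*) [Semiring A] [Algebra R A]

/-- The empty tensor power of an algebra is the base ring. -/
noncomputable def tensorPowerZeroAlgEquiv : (⨂[R] _ : Fin 0, A) ≃ₐ[R] R :=
  piTensorAlgEquivOfLinearEquiv (isEmptyEquiv (Fin 0)) (isEmptyEquiv_apply_tprod _ _)
    fun _ _ => by simp only [isEmptyEquiv_apply_tprod, mul_one]

/-- Splitting off the first factor of a tensor power, as a linear equivalence. -/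
noncomputable def tensorPowerSuccLinearEquiv (n : ℕ) :
    (⨂[R] _ : Fin (n + 1), A) ≃ₗ[R] A ⊗[R] (⨂[R] _ : Fin n, A) :=
  (reindex R (fun _ => A) <| (finSuccEquiv n).trans <|
      (Equiv.optionEquivSumPUnit.{0} (Fin n)).trans (Equiv.sumComm _ _)) ≪≫ₗ
    (tmulEquiv R A).symm ≪≫ₗ
      TensorProduct.congr (subsingletonEquiv PUnit.unit) (LinearEquiv.refl R _)

theorem tensorPowerSuccLinearEquiv_tprod {n : ℕ} (f : Fin (n + 1) → A) :
    tensorPowerSuccLinearEquiv R A n (tprod R f) = f 0 ⊗ₜ[R] tprod R (Fin.tail f) := by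
  simp only [tensorPowerSuccLinearEquiv, LinearEquiv.trans_apply, reindex_tprod]
  exact (congrArg _ (tmulEquiv_symm_apply R A _)).trans <|
    congrArg (· ⊗ₜ[R] _) (subsingletonEquiv_apply_tprod _ _)

/-- Splitting off the first factor of a tensor power, as an algebra equivalence. -/
noncomputable def tensorPowerSuccAlgEquiv (n : ℕ) :
    (⨂[R] _ : Fin (n + 1), A) ≃ₐ[R] A ⊗[R] (⨂[R] _ : Fin n, A) :=
  piTensorAlgEquivOfLinearEquiv (tensorPowerSuccLinearEquiv R A n)
    (tensorPowerSuccLinearEquiv_tprod R A 1)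
    fun f g => by
      simp only [tensorPowerSuccLinearEquiv_tprod, Algebra.TensorProduct.tmul_mul_tmul,
        tprod_mul_tprod]
      rfl

end TensorPower

theorem mul_mul_mul_self_of_anticommute {A : Type*} [Ring A] {u v : A} (h : u * v = -(v * u)) :
    u * v * (u * v) = -(u * u * (v * v)) :=
  calc u * v * (u * v) = u * (v * u) * v := by simp only [mul_assoc]
    _ = -(u * u * (v * v)) := by
      rw [← neg_eq_iff_eq_neg.mpr h]; simp only [mul_neg, neg_mul, mul_assoc]

open CliffordAlgebra QuadraticMap

section Clifford

variable {R V M A : Type*} [CommRing R] [AddCommGroup V] [Module R V] [AddCommGroup M] [Module R M]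

theorem commute_map_of_commute_ι [Semiring A] [Algebra R A] {Q : QuadraticForm R M} {a : A}
    (f : CliffordAlgebra Q →ₐ[R] A) (h : ∀ m, Commute a (f (ι Q m))) (x : CliffordAlgebra Q) :
    Commute a (f x) := by
  induction x using CliffordAlgebra.induction with
  | algebraMap r => rw [AlgHom.commutes]; exact Algebra.commute_algebraMap_right r a
  | ι m => exact h m
  | mul x y hx hy => rw [map_mul]; exact hx.mul_right hy
  | add x y hx hy => rw [map_add]; exact hx.add_right hy

theorem ι_inl_mul_ι_inr (P : QuadraticForm R V) (Q : QuadraticForm R M) (v : V) (m : M) :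
    ι (P.prod Q) (v, 0) * ι (P.prod Q) (0, m) = -(ι (P.prod Q) (0, m) * ι (P.prod Q) (v, 0)) :=
  ι_mul_ι_comm_of_isOrtho (.inl_inr v m)

section LiftProd

variable [Ring A] [Algebra R A] {P : QuadraticForm R V} {Q : QuadraticForm R M}
  (f : V →ₗ[R] A) (g : M →ₗ[R] A) (hf : ∀ v, f v * f v = algebraMap R A (P v))
  (hg : ∀ m, g m * g m = algebraMap R A (Q m)) (hfg : ∀ v m, f v * g m = -(g m * f v))

/-- The universal property of the Clifford algebra of an orthogonal sum: anticommuting Clifford maps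
on the two summands extend to the whole algebra. -/
noncomputable def cliffordLiftProd : CliffordAlgebra (P.prod Q) →ₐ[R] A :=
  lift _ ⟨f.coprod g, fun x => by
    rw [LinearMap.coprod_apply, add_mul, mul_add, mul_add, hfg, hf, hg, prod_apply, map_add]
    abel⟩

theorem cliffordLiftProd_ι (x : V × M) :
    cliffordLiftProd f g hf hg hfg (ι _ x) = f x.1 + g x.2 := by
  rw [cliffordLiftProd, lift_ι_apply, LinearMap.coprod_apply]

end LiftProd

section LineTwist

variable (P : QuadraticForm R R) {Q Q' : QuadraticForm R M}

/-- The homomorphism `Cl(P ⊥ Q) → Cl(P ⊥ Q')` that fixes the generator `e` of the line `P` and sends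
a vector `m` of `Q` to `k e m`. -/
noncomputable def lineTwistHom (k : R) (hQ : ∀ m, Q m = -(k * k * P 1) * Q' m) :
    CliffordAlgebra (P.prod Q) →ₐ[R] CliffordAlgebra (P.prod Q') :=
  cliffordLiftProd (ι _ ∘ₗ .inl R R M)
    (.mulLeft R (k • ι _ (1, 0)) ∘ₗ ι _ ∘ₗ .inr R R M)
    (fun x => by simp [ι_sq_scalar])
    (fun m => by
      simp only [LinearMap.comp_apply, LinearMap.mulLeft_apply, LinearMap.inr_apply,
        smul_mul_assoc, mul_smul_comm,
        mul_mul_mul_self_of_anticommute (ι_inl_mul_ι_inr P Q' 1 m), ι_sq_scalar]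
      simp [hQ, Algebra.smul_def, mul_assoc])
    (fun x m => by
      have hx : ι (P.prod Q') (x, 0) = x • ι (P.prod Q') (1, 0) := by simp [← map_smul]
      simp only [LinearMap.comp_apply, LinearMap.mulLeft_apply, LinearMap.inl_apply,
        LinearMap.inr_apply, hx, smul_mul_assoc, mul_smul_comm, ← smul_neg]
      rw [mul_assoc (ι (P.prod Q') (1, 0)), ← mul_neg, ← ι_inl_mul_ι_inr, smul_comm])

theorem lineTwistHom_ι_inl (k : R) (hQ : ∀ m, Q m = -(k * k * P 1) * Q' m) (x : R) :
    lineTwistHom P k hQ (ι _ (x, 0)) = ι _ (x, 0) := by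
  simp only [lineTwistHom, cliffordLiftProd_ι, LinearMap.comp_apply, LinearMap.inl_apply, map_zero,
    add_zero]

theorem lineTwistHom_ι_inr (k : R) (hQ : ∀ m, Q m = -(k * k * P 1) * Q' m) (m : M) :
    lineTwistHom P k hQ (ι _ (0, m)) = k • (ι _ (1, 0) * ι _ (0, m)) := by
  simp only [lineTwistHom, cliffordLiftProd_ι, LinearMap.comp_apply, LinearMap.inr_apply,
    LinearMap.mulLeft_apply, map_zero, zero_add, smul_mul_assoc]

theorem lineTwistHom_comp_lineTwistHom {k k' : R} (hk : k * k' * P 1 = 1)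
    (hQ : ∀ m, Q m = -(k * k * P 1) * Q' m) (hQ' : ∀ m, Q' m = -(k' * k' * P 1) * Q m) :
    (lineTwistHom P k' hQ').comp (lineTwistHom P k hQ) = AlgHom.id R _ := by
  ext m
  · simp [lineTwistHom_ι_inl]
  · simp [lineTwistHom_ι_inr, lineTwistHom_ι_inl, ← mul_assoc, ι_sq_scalar, smul_smul,
      Algebra.algebraMap_eq_smul_one, hk]

/-- The isomorphism `Cl(⟨a⟩ ⊥ -a Q') ≅ Cl(⟨a⟩ ⊥ Q')` for a unit `a` with inverse `b`, where `P` is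
the form `⟨a⟩`. -/
noncomputable def lineTwistAlgEquiv {b : R} (hb : b * P 1 = 1) (hQ : ∀ m, Q m = -P 1 * Q' m) :
    CliffordAlgebra (P.prod Q) ≃ₐ[R] CliffordAlgebra (P.prod Q') :=
  have h : ∀ m, Q m = -(1 * 1 * P 1) * Q' m := by simpa using hQ
  have h' : ∀ m, Q' m = -(b * b * P 1) * Q m := fun m => by
    linear_combination b * b * P 1 * hQ m - (b * P 1 + 1) * Q' m * hb
  .ofAlgHom (lineTwistHom P 1 h) (lineTwistHom P b h')
    (lineTwistHom_comp_lineTwistHom P (by simpa using hb) h' h)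
    (lineTwistHom_comp_lineTwistHom P (by simpa using hb) h h')

end LineTwist

/-- An element of a Clifford algebra that behaves like the product of an orthogonal basis of an
even-dimensional space: it is even, anticommutes with vectors, and has square `c`. -/
structure IsVolumeElement (P : QuadraticForm R V) (c : R) (ω : CliffordAlgebra P) : Prop where
  mem_even : ω ∈ evenOdd P 0
  mul_ι : ∀ v, ω * ι P v = -(ι P v * ω)
  mul_self : ω * ω = algebraMap R _ c

theorem isVolumeElement_prod (P Q : QuadraticForm R R) :
    IsVolumeElement (P.prod Q) (-(P 1 * Q 1)) (ι (P.prod Q) (1, 0) * ι (P.prod Q) (0, 1)) where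
  mem_even := ι_mul_ι_mem_evenOdd_zero _ _ _
  mul_ι v := by
    have hv : ι (P.prod Q) v = v.1 • ι (P.prod Q) (1, 0) + v.2 • ι (P.prod Q) (0, 1) := by
      simp [← map_smul, ← map_add]
    have he := ι_inl_mul_ι_inr P Q 1 1
    have hf := neg_eq_iff_eq_neg.mpr he
    simp only [hv, mul_add, add_mul, mul_smul_comm, smul_mul_assoc, neg_add, ← smul_neg]
    congr 2
    · rw [mul_assoc, ← hf, mul_neg]
    · rw [← mul_assoc, ← neg_mul, ← he]
  mul_self := by
    simp [mul_mul_mul_self_of_anticommute (ι_inl_mul_ι_inr P Q 1 1), ι_sq_scalar]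

namespace IsVolumeElement

variable {P : QuadraticForm R V} {Q Q' : QuadraticForm R M} {b c : R} {ω : CliffordAlgebra P}

theorem commute_map_inl_ι_inr (hω : IsVolumeElement P c ω) (m : M) :
    Commute (map (.inl P Q) ω) (ι (P.prod Q) (0, m)) := by
  simpa using commute_map_mul_map_of_isOrtho_of_mem_evenOdd_zero_left (.inl P Q) (.inr P Q)
    .inl_inr ω (ι Q m) hω.mem_even (ι_mem_evenOdd_one Q m)

/-- For `Q' = c Q`, the embedding of `Cl(Q)` into `Cl(P ⊥ Q')` that sends a vector `m` to
`c⁻¹ ω m`; here `b` plays the role of `c⁻¹`. -/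
noncomputable def twistedInr (hω : IsVolumeElement P c ω) (hbc : b * c = 1)
    (hQ : ∀ m, Q' m = c * Q m) : CliffordAlgebra Q →ₐ[R] CliffordAlgebra (P.prod Q') :=
  lift Q ⟨.mulLeft R (b • map (.inl P Q') ω) ∘ₗ ι _ ∘ₗ .inr R V M, fun m => by
    calc
      _ = (b * b) • (map (.inl P Q') ω * ι (P.prod Q') (0, m) *
            (map (.inl P Q') ω * ι (P.prod Q') (0, m))) := by simp [smul_smul]
      _ = (b * b) • (map (.inl P Q') (ω * ω) *
            (ι (P.prod Q') (0, m) * ι (P.prod Q') (0, m))) := by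
        rw [(hω.commute_map_inl_ι_inr m).symm.mul_mul_mul_comm, map_mul]
      _ = algebraMap R _ (b * b * (c * (c * Q m))) := by
        simp [hω.mul_self, ι_sq_scalar, hQ, Algebra.smul_def]
      _ = algebraMap R _ (Q m) := by
        congr 1; linear_combination (b * c + 1) * Q m * hbc⟩

theorem twistedInr_ι (hω : IsVolumeElement P c ω) (hbc : b * c = 1) (hQ : ∀ m, Q' m = c * Q m)
    (m : M) : hω.twistedInr hbc hQ (ι Q m) = b • (map (.inl P Q') ω * ι (P.prod Q') (0, m)) := by
  simp [twistedInr]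

theorem commute_map_inl_twistedInr (hω : IsVolumeElement P c ω) (hbc : b * c = 1)
    (hQ : ∀ m, Q' m = c * Q m) (x : CliffordAlgebra P) (y : CliffordAlgebra Q) :
    Commute (map (.inl P Q') x) (hω.twistedInr hbc hQ y) := by
  refine commute_map_of_commute_ι _ (fun m => ?_) y
  refine (commute_map_of_commute_ι _ (fun v => ?_) x).symm
  rw [twistedInr_ι, map_apply_ι, Isometry.inl_apply]
  refine .smul_left ?_ b
  calc
    map (.inl P Q') ω * ι _ (0, m) * ι _ (v, 0)
      = -(map (.inl P Q') (ω * ι P v) * ι _ (0, m)) := by simp [mul_assoc, ι_inl_mul_ι_inr]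
    _ = ι _ (v, 0) * (map (.inl P Q') ω * ι _ (0, m)) := by simp [hω.mul_ι, mul_assoc]

/-- The homomorphism `Cl(P) ⊗ Cl(Q) → Cl(P ⊥ c Q)` that sends `v ⊗ 1` to `v` and `1 ⊗ m` to
`c⁻¹ ω m`. -/
noncomputable def ofTensor (hω : IsVolumeElement P c ω) (hbc : b * c = 1)
    (hQ : ∀ m, Q' m = c * Q m) :
    CliffordAlgebra P ⊗[R] CliffordAlgebra Q →ₐ[R] CliffordAlgebra (P.prod Q') :=
  Algebra.TensorProduct.lift (map (.inl P Q')) (hω.twistedInr hbc hQ)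
    (hω.commute_map_inl_twistedInr hbc hQ)

/-- The homomorphism `Cl(P ⊥ c Q) → Cl(P) ⊗ Cl(Q)` that sends a vector `(v, m)` to
`v ⊗ 1 + ω ⊗ m`. -/
noncomputable def toTensor (hω : IsVolumeElement P c ω) (hQ : ∀ m, Q' m = c * Q m) :
    CliffordAlgebra (P.prod Q') →ₐ[R] CliffordAlgebra P ⊗[R] CliffordAlgebra Q :=
  cliffordLiftProd
    (Algebra.TensorProduct.includeLeft.toLinearMap ∘ₗ ι P)
    (TensorProduct.mk R _ _ ω ∘ₗ ι Q)
    (fun v => by simp [ι_sq_scalar])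
    (fun m => by
      simp [ι_sq_scalar, hω.mul_self, hQ, Algebra.algebraMap_eq_smul_one, smul_smul,
        TensorProduct.smul_tmul', TensorProduct.tmul_smul, mul_comm,
        Algebra.TensorProduct.one_def])
    (fun v m => by simp [hω.mul_ι, TensorProduct.neg_tmul])

theorem toTensor_ι (hω : IsVolumeElement P c ω) (hQ : ∀ m, Q' m = c * Q m) (x : V × M) :
    hω.toTensor hQ (ι _ x) = ι P x.1 ⊗ₜ 1 + ω ⊗ₜ ι Q x.2 := by
  simp [toTensor, cliffordLiftProd_ι]

theorem toTensor_map_inl (hω : IsVolumeElement P c ω) (hQ : ∀ m, Q' m = c * Q m)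
    (x : CliffordAlgebra P) : hω.toTensor hQ (map (.inl P Q') x) = x ⊗ₜ 1 := by
  suffices (hω.toTensor hQ).comp (map (.inl P Q')) = Algebra.TensorProduct.includeLeft from
    DFunLike.congr_fun this x
  ext v
  simp [toTensor_ι]

theorem ofTensor_comp_toTensor (hω : IsVolumeElement P c ω) (hbc : b * c = 1)
    (hQ : ∀ m, Q' m = c * Q m) :
    (hω.ofTensor hbc hQ).comp (hω.toTensor hQ) = AlgHom.id R _ := by
  ext x
  · simp [ofTensor, toTensor_ι]
  · simp [ofTensor, toTensor_ι, twistedInr_ι, ← mul_assoc, ← map_mul, hω.mul_self,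
      Algebra.algebraMap_eq_smul_one, smul_smul, hbc]

theorem toTensor_comp_ofTensor (hω : IsVolumeElement P c ω) (hbc : b * c = 1)
    (hQ : ∀ m, Q' m = c * Q m) :
    (hω.toTensor hQ).comp (hω.ofTensor hbc hQ) = AlgHom.id R _ := by
  ext x
  · simp [ofTensor, toTensor_ι]
  · simp [ofTensor, toTensor_ι, twistedInr_ι, toTensor_map_inl, hω.mul_self,
      Algebra.algebraMap_eq_smul_one, TensorProduct.smul_tmul', smul_smul, hbc]

/-- The isomorphism `Cl(P) ⊗ Cl(Q) ≅ Cl(P ⊥ c Q)` for a form `P` with a volume element of unit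
square `c`, whose inverse is `b`. -/
noncomputable def tensorAlgEquiv (hω : IsVolumeElement P c ω) (hbc : b * c = 1)
    (hQ : ∀ m, Q' m = c * Q m) :
    CliffordAlgebra P ⊗[R] CliffordAlgebra Q ≃ₐ[R] CliffordAlgebra (P.prod Q') :=
  .ofAlgHom (hω.ofTensor hbc hQ) (hω.toTensor hQ) (hω.ofTensor_comp_toTensor hbc hQ)
    (hω.toTensor_comp_ofTensor hbc hQ)

end IsVolumeElement

/-- `Q ≅ P⁰ ⊥ Q`. -/
def prodPiZeroIsometry (P : QuadraticForm R V) (Q : QuadraticForm R M) :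
    Q.IsometryEquiv ((pi fun _ : Fin 0 => P).prod Q) where
  toLinearEquiv := LinearEquiv.uniqueProd.symm
  map_app' x := by simp [pi_apply]

/-- `P ⊥ (Pⁿ ⊥ Q) ≅ Pⁿ⁺¹ ⊥ Q`. -/
def prodPiSuccIsometry (P : QuadraticForm R V) (Q : QuadraticForm R M) (n : ℕ) :
    (P.prod ((pi fun _ : Fin n => P).prod Q)).IsometryEquiv
      ((pi fun _ : Fin (n + 1) => P).prod Q) where
  toLinearEquiv := (LinearEquiv.prodAssoc R V (Fin n → V) M).symm ≪≫ₗ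
    (Fin.consLinearEquiv R fun _ : Fin (n + 1) => V).prodCongr (.refl R M)
  map_app' := fun (v, w, m) => by
    change ((pi fun _ : Fin (n + 1) => P).prod Q) (Fin.cons v w, m) = _
    simp [pi_apply, Fin.sum_univ_succ, add_assoc]

theorem cl20_tensorPower_iso_general [Semiring A] [Algebra R A] {P : QuadraticForm R V}
    {ω : CliffordAlgebra P} (e : A ≃ₐ[R] CliffordAlgebra P) (hω : IsVolumeElement P 1 ω) (n : ℕ)
    (Q : QuadraticForm R M) :
    Nonempty (((⨂[R] _ : Fin n, A) ⊗[R] CliffordAlgebra Q) ≃ₐ[R]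
      CliffordAlgebra ((pi fun _ : Fin n => P).prod Q)) := by
  induction n with
  | zero =>
    exact ⟨(Algebra.TensorProduct.congr (tensorPowerZeroAlgEquiv R A) .refl).trans <|
      (Algebra.TensorProduct.lid R _).trans (equivOfIsometry (prodPiZeroIsometry P Q))⟩
  | succ n ih =>
    obtain ⟨f⟩ := ih
    exact ⟨(Algebra.TensorProduct.congr (tensorPowerSuccAlgEquiv R A n) .refl).trans <|
      (Algebra.TensorProduct.assoc R R R _ _ _).trans <|
      (Algebra.TensorProduct.congr e f).trans <|
      (hω.tensorAlgEquiv (mul_one 1) fun _ => (one_mul _).symm).trans <|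
      equivOfIsometry (prodPiSuccIsometry P Q n)⟩

variable (R) in
/-- The hyperbolic plane `x² - y²`. -/
abbrev hyperbolicPlane : QuadraticForm R (R × R) :=
  QuadraticMap.sq.prod (-QuadraticMap.sq)

theorem isVolumeElement_hyperbolicPlane :
    IsVolumeElement (hyperbolicPlane R) 1 (ι _ (1, 0) * ι _ (0, 1)) := by
  simpa using isVolumeElement_prod (QuadraticMap.sq (R := R)) (-QuadraticMap.sq)

end Clifford

theorem signatureForm_apply {p q : ℕ} (v : Fin (p + q) → ℝ) :
    signatureForm p q v = ∑ i, v (Fin.castAdd q i) * v (Fin.castAdd q i) -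
      ∑ j, v (Fin.natAdd p j) * v (Fin.natAdd p j) := by
  simp [signatureForm, weightedSumSquares_apply, Fin.sum_univ_add, sub_eq_add_neg]

/-- The form of signature `(2, 0)` is `x² + y²`. -/
noncomputable def signatureFormTwoZeroIsometry :
    (signatureForm 2 0).IsometryEquiv
      ((QuadraticMap.sq (R := ℝ)).prod (QuadraticMap.sq (R := ℝ))) where
  toLinearEquiv := LinearEquiv.finTwoArrow ℝ ℝ
  map_app' v := by simp [signatureForm, weightedSumSquares_apply, Fin.sum_univ_two]

/-- `Cl(2,0;ℝ)` is also the Clifford algebra of the hyperbolic plane. -/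
noncomputable def clTwoZeroAlgEquiv : Cl 2 0 ≃ₐ[ℝ] CliffordAlgebra (hyperbolicPlane ℝ) :=
  (equivOfIsometry signatureFormTwoZeroIsometry).trans <|
    lineTwistAlgEquiv (QuadraticMap.sq (R := ℝ)) (b := 1) (by simp) (by simp)

/-- Adding `n` hyperbolic planes raises both entries of the signature by `n`. -/
noncomputable def signatureFormAddIsometry (n p q : ℕ) :
    ((pi fun _ : Fin n => hyperbolicPlane ℝ).prod (signatureForm p q)).IsometryEquiv
      (signatureForm (p + n) (q + n)) where
  toFun x := Fin.append (Fin.append (fun i => x.2 (.castAdd q i)) fun k => (x.1 k).1)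
    (Fin.append (fun j => x.2 (.natAdd p j)) fun k => (x.1 k).2)
  invFun v := (fun k => (v (.castAdd _ (.natAdd p k)), v (.natAdd _ (.natAdd q k))),
    Fin.append (fun i => v (.castAdd _ (.castAdd n i))) fun j => v (.natAdd _ (.castAdd n j)))
  map_add' x y := by
    ext i
    induction i using Fin.addCases with
    | left i | right i => induction i using Fin.addCases <;> simp
  map_smul' c x := by
    ext i
    induction i using Fin.addCases with
    | left i | right i => induction i using Fin.addCases <;> simp
  left_inv x := by
    ext i
    · simp
    · simp
    · induction i using Fin.addCases <;> simp
  right_inv v := by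
    ext i
    induction i using Fin.addCases with
    | left i | right i => induction i using Fin.addCases <;> simp
  map_app' x := by
    simp only [signatureForm_apply, Fin.sum_univ_add, pi_apply, prod_apply, neg_apply, sq_apply,
      Fin.append_left, Fin.append_right, Finset.sum_add_distrib, Finset.sum_neg_distrib]
    ring

/-- For every `n p q`, the `n`-fold tensor power of `Cl(2,0;ℝ)` tensored with
`Cl(p,q;ℝ)` is isomorphic as a real algebra to `Cl(p+n,q+n;ℝ)`. -/
theorem cl20_tensorPower_iso (n p q : ℕ) :
    Nonempty (((⨂[ℝ] _ : Fin n, Cl 2 0) ⊗[ℝ] Cl p q) ≃ₐ[ℝ] Cl (p + n) (q + n)) :=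
  (cl20_tensorPower_iso_general clTwoZeroAlgEquiv isVolumeElement_hyperbolicPlane n _).map
    (·.trans (equivOfIsometry (signatureFormAddIsometry n p q)))
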